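/- Truth lemma for the canonical model: for every maximal SKH-consistent set Γ, every state Δ of S^c_Γ, and every formula φ of L_Kh, M^c_Γ, Δ ⊨ φ if and only if φ ∈ Δ. -/

import Mathlib

/-- Formulas of the language L_Kh. -/
inductive Formula (P : Type) : Type
  | top : Formula P
  | atom : P → Formula P
  | neg : Formula P → Formula P
  | and : Formula P → Formula P → Formula P
  | kh : Formula P → Formula P → Formula P

namespace Formula

/-- ⊥ abbreviates ¬⊤. -/
def bot {P : Type} : Formula P := neg top

/-- φ → ψ abbreviates ¬(φ ∧ ¬ψ). -/
def imp {P : Type} (φ ψ : Formula P) : Formula P := neg (φ.and ψ.neg)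

/-- φ ↔ ψ. -/
def iff_ {P : Type} (φ ψ : Formula P) : Formula P := (φ.imp ψ).and (ψ.imp φ)

/-- Uφ abbreviates Kh(¬φ, ⊥). -/
def U {P : Type} (φ : Formula P) : Formula P := kh (neg φ) bot

end Formula

/-- A model (ability map): a labelled transition system with a nonempty set
of states, transitions labelled by action symbols in `A`, and a valuation. -/
structure Model (P A : Type) where
  S : Type
  ne : Nonempty S
  R : A → S → S → Prop
  V : S → Set P

namespace Model

/-- `runs M σ s t` means s →σ t. -/
def runs {P A : Type} (M : Model P A) : List A → M.S → M.S → Prop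
  | [], s, t => s = t
  | a :: σ, s, t => ∃ u, M.R a s u ∧ M.runs σ u t

/-- σ = a₁…aₙ is strongly executable at s: for every k < n and every t
reached from s by the length-k prefix of σ, t has an a_{k+1}-successor. -/
def SE {P A : Type} (M : Model P A) (σ : List A) (s : M.S) : Prop :=
  ∀ (k : ℕ) (hk : k < σ.length) (t : M.S),
    M.runs (σ.take k) s t → ∃ u, M.R (σ.get ⟨k, hk⟩) t u

end Model

/-- Truth of a formula at a state of a model. -/
def Sat {P A : Type} (M : Model P A) : Formula P → M.S → Prop
  | .top, _ => True
  | .atom p, s => p ∈ M.V s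
  | .neg φ, s => ¬ Sat M φ s
  | .and φ ψ, s => Sat M φ s ∧ Sat M ψ s
  | .kh ψ φ, _ => ∃ σ : List A, ∀ s' : M.S, Sat M ψ s' →
      M.SE σ s' ∧ ∀ t : M.S, M.runs σ s' t → Sat M φ t

/-- Validity: truth at every state of every model (over a countable
nonempty set of action symbols). -/
def Valid {P : Type} (φ : Formula P) : Prop :=
  ∀ (A : Type) [Countable A] [Nonempty A] (M : Model P A) (s : M.S), Sat M φ s

/-- Boolean evaluation of a formula, treating atoms and Kh-formulas as
propositional variables (used to define instances of propositional tautologies). -/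
def evalB {P : Type} (v : Formula P → Bool) : Formula P → Bool
  | .top => true
  | .atom p => v (.atom p)
  | .neg φ => !(evalB v φ)
  | .and φ ψ => evalB v φ && evalB v ψ
  | .kh ψ φ => v (.kh ψ φ)

/-- Uniform substitution of formulas for proposition letters. -/
def subst {P : Type} (s : P → Formula P) : Formula P → Formula P
  | .top => .top
  | .atom p => s p
  | .neg φ => (subst s φ).neg
  | .and φ ψ => (subst s φ).and (subst s ψ)
  | .kh ψ φ => (subst s ψ).kh (subst s φ)

/-- The proof system SKH. -/
inductive Derivable {P : Type} : Formula P → Prop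
  /-- all instances of propositional tautologies -/
  | taut {φ : Formula P} : (∀ v : Formula P → Bool, evalB v φ = true) → Derivable φ
  /-- DISTU -/
  | distU (φ ψ : Formula P) : Derivable (((φ.U).and ((φ.imp ψ).U)).imp ψ.U)
  /-- COMPKh -/
  | compKh (φ ρ χ : Formula P) : Derivable (((φ.kh ρ).and (ρ.kh χ)).imp (φ.kh χ))
  /-- EMP -/
  | emp (φ χ : Formula P) : Derivable (((φ.imp χ).U).imp (φ.kh χ))
  /-- TU -/
  | tU (φ : Formula P) : Derivable ((φ.U).imp φ)
  /-- 4KU -/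
  | fourKU (φ χ : Formula P) : Derivable ((φ.kh χ).imp ((φ.kh χ).U))
  /-- 5KU -/
  | fiveKU (φ χ : Formula P) : Derivable (((φ.kh χ).neg).imp (((φ.kh χ).neg).U))
  /-- modus ponens -/
  | mp {φ ψ : Formula P} : Derivable (φ.imp ψ) → Derivable φ → Derivable ψ
  /-- NECU -/
  | necU {φ : Formula P} : Derivable φ → Derivable φ.U
  /-- SUB: uniform substitution -/
  | sub {φ : Formula P} (s : P → Formula P) : Derivable φ → Derivable (subst s φ)

/-- A set of formulas is SKH-consistent if no finite conjunction of its
members proves ⊥ in SKH. -/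
def Consistent {P : Type} (Γ : Set (Formula P)) : Prop :=
  ¬ ∃ l : List (Formula P), (∀ φ ∈ l, φ ∈ Γ) ∧
      Derivable ((l.foldr Formula.and Formula.top).imp Formula.bot)

/-- Maximal consistent set. -/
def MCS {P : Type} (Γ : Set (Formula P)) : Prop :=
  Consistent Γ ∧ ∀ Δ : Set (Formula P), Consistent Δ → Γ ⊆ Δ → Δ = Γ

/-- Δ|_Kh : the Kh-formulas in Δ. -/
def khPart {P : Type} (Δ : Set (Formula P)) : Set (Formula P) :=
  {χ | χ ∈ Δ ∧ ∃ ψ φ : Formula P, χ = ψ.kh φ}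

/-- The states S^c_Γ of the canonical model for Γ. -/
def canonStates {P : Type} (Γ : Set (Formula P)) : Set (Set (Formula P)) :=
  {Δ | MCS Δ ∧ khPart Δ = khPart Γ}

/-- The action symbols Σ_Γ of the canonical model: pairs ⟨ψ,φ⟩ with Kh(ψ,φ) ∈ Γ. -/
def SigmaGamma {P : Type} (Γ : Set (Formula P)) : Type :=
  {pr : Formula P × Formula P // (pr.1.kh pr.2) ∈ Γ}

/-- The canonical model M^c_Γ for a maximal consistent set Γ. -/
def canonicalModel {P : Type} (Γ : Set (Formula P)) (hΓ : MCS Γ) :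
    Model P (SigmaGamma Γ) where
  S := {Δ : Set (Formula P) // Δ ∈ canonStates Γ}
  ne := ⟨⟨Γ, hΓ, rfl⟩⟩
  R := fun a Δ Θ => a.val.1 ∈ Δ.val ∧ a.val.2 ∈ Θ.val
  V := fun Δ => {p | Formula.atom p ∈ Δ.val}

/-!
A maximal consistent set `Γ` settles every `Kh`-formula, and by 4KU and 5KU it does so under `U`.
Hence the states of the canonical model are exactly the maximal consistent extensions of the
`Kh`-literals of `Γ`, and `Uφ ∈ Γ` as soon as all of them contain `φ`. By EMP, any inclusion between
the states containing `ψ` and those containing `χ` then yields `Kh(ψ, χ) ∈ Γ`.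

If `Kh(ψ, φ) ∈ Γ`, then the one-step plan `⟨ψ, φ⟩` is a witness. Conversely, let a plan `a₁ … aₙ`
lead from all states with `ψ` to states with `φ`. Executability of `a₁` means that `ψ` implies its
precondition at every state, and every state satisfying its postcondition is reached from every
state with `ψ`. An induction on the plan therefore chains up its actions, whose `Kh`-formulas are
in `Γ`, by COMPKh.
-/

section Tautologies

variable {P : Type} (v : Formula P → Bool) (φ ψ : Formula P)

theorem evalB_neg : evalB v φ.neg = true ↔ ¬ evalB v φ = true := by
  simp [evalB]

theorem evalB_and : evalB v (φ.and ψ) = true ↔ evalB v φ = true ∧ evalB v ψ = true := by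
  simp [evalB]

theorem evalB_imp : evalB v (φ.imp ψ) = true ↔ (evalB v φ = true → evalB v ψ = true) := by
  rw [Formula.imp, evalB_neg, evalB_and, evalB_neg, not_and_not_right]

theorem evalB_bot : ¬ evalB v (Formula.bot : Formula P) = true := by
  simp [evalB, Formula.bot]

/-- The conjunction of a finite list of formulas, in the form used by `Consistent`. -/
def Formula.conj (l : List (Formula P)) : Formula P := l.foldr Formula.and Formula.top

theorem evalB_conj (l : List (Formula P)) :
    evalB v (Formula.conj l) = true ↔ ∀ χ ∈ l, evalB v χ = true := by
  induction l with
  | nil => simp [Formula.conj, evalB]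
  | cons χ l ih => rw [List.forall_mem_cons, ← ih]; exact evalB_and v χ (Formula.conj l)

variable {φ ψ}

theorem Derivable.of_evalB_imp (h : Derivable φ)
    (hv : ∀ v, evalB v φ = true → evalB v ψ = true) : Derivable ψ :=
  mp (taut fun v => (evalB_imp v φ ψ).2 (hv v)) h

end Tautologies

/-- Derivability from premises: some finite conjunction of members of `S` provably implies `φ`.
Thus `Consistent S` unfolds to `¬ DerivableFrom S ⊥`. -/
def DerivableFrom {P : Type} (S : Set (Formula P)) (φ : Formula P) : Prop :=
  ∃ l : List (Formula P), (∀ χ ∈ l, χ ∈ S) ∧ Derivable ((Formula.conj l).imp φ)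

namespace DerivableFrom

variable {P : Type} {S : Set (Formula P)} {φ ψ : Formula P}

theorem of_derivable (h : Derivable φ) : DerivableFrom S φ :=
  ⟨[], by simp, h.of_evalB_imp fun v hφ => (evalB_imp v _ _).2 fun _ => hφ⟩

theorem of_mem (h : φ ∈ S) : DerivableFrom S φ :=
  ⟨[φ], by simpa using h, .taut fun v => by simp [evalB_imp, evalB_conj]⟩

theorem mp (himp : DerivableFrom S (φ.imp ψ)) (hφ : DerivableFrom S φ) : DerivableFrom S ψ := by
  obtain ⟨l, hl, hl_imp⟩ := himp
  obtain ⟨m, hm, hm_φ⟩ := hφ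
  refine ⟨l ++ m, List.forall_mem_append.2 ⟨hl, hm⟩, .mp (hl_imp.of_evalB_imp fun v => ?_) hm_φ⟩
  simp only [evalB_imp, evalB_conj, List.forall_mem_append]
  tauto

theorem of_evalB_imp (h : DerivableFrom S φ)
    (hv : ∀ v, evalB v φ = true → evalB v ψ = true) : DerivableFrom S ψ :=
  (of_derivable (.taut fun v => (evalB_imp v φ ψ).2 (hv v))).mp h

theorem deduction (h : DerivableFrom (insert φ S) ψ) : DerivableFrom S (φ.imp ψ) := by
  classical
  obtain ⟨l, hl, hlψ⟩ := h
  refine ⟨l.filter (· ≠ φ), fun χ hχ => ?_, hlψ.of_evalB_imp fun v => ?_⟩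
  · obtain ⟨hχl, hχφ⟩ : χ ∈ l ∧ χ ≠ φ := by simpa using hχ
    exact (hl χ hχl).resolve_left hχφ
  · simp only [evalB_imp, evalB_conj, List.mem_filter, decide_eq_true_eq]
    intro hψ hrest hφ
    refine hψ fun χ hχ => ?_
    by_cases heq : χ = φ
    · rwa [heq]
    · exact hrest χ ⟨hχ, heq⟩

theorem and_intro (hφ : DerivableFrom S φ) (hψ : DerivableFrom S ψ) :
    DerivableFrom S (φ.and ψ) := by
  refine (hφ.of_evalB_imp fun v hφ => ?_).mp hψ
  rw [evalB_imp, evalB_and]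
  exact fun hψ => ⟨hφ, hψ⟩

theorem mp_U (himp : DerivableFrom S (φ.imp ψ).U) (hφ : DerivableFrom S φ.U) :
    DerivableFrom S ψ.U :=
  (of_derivable (.distU φ ψ)).mp (hφ.and_intro himp)

theorem U_conj {l : List (Formula P)} (h : ∀ χ ∈ l, DerivableFrom S χ.U) :
    DerivableFrom S (Formula.conj l).U := by
  induction l with
  | nil => exact of_derivable (.necU (.taut fun _ => rfl))
  | cons χ l ih =>
    obtain ⟨hχ, hl⟩ := List.forall_mem_cons.1 h
    have and_taut : Derivable (χ.imp ((Formula.conj l).imp (χ.and (Formula.conj l)))) :=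
      .taut fun v => by
        simp only [evalB_imp, evalB_and]
        exact And.intro
    exact ((of_derivable (.necU and_taut)).mp_U hχ).mp_U (ih hl)

theorem necU {T : Set (Formula P)} (h : DerivableFrom S φ)
    (hS : ∀ χ ∈ S, DerivableFrom T χ.U) : DerivableFrom T φ.U := by
  obtain ⟨l, hl, hlφ⟩ := h
  exact (of_derivable (.necU hlφ)).mp_U (U_conj fun χ hχ => hS χ (hl χ hχ))

end DerivableFrom

namespace MCS

variable {P : Type} {S : Set (Formula P)} {φ ψ χ : Formula P}

theorem mem_of_derivableFrom (hS : MCS S) (h : DerivableFrom S φ) : φ ∈ S := by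
  have hcons : Consistent (insert φ S) := fun hbot => hS.1 ((DerivableFrom.deduction hbot).mp h)
  rw [← hS.2 _ hcons (Set.subset_insert φ S)]
  exact Set.mem_insert φ S

theorem mem_of_derivable_imp (hS : MCS S) (himp : Derivable (φ.imp ψ)) (hφ : φ ∈ S) : ψ ∈ S :=
  hS.mem_of_derivableFrom ((DerivableFrom.of_derivable himp).mp (.of_mem hφ))

theorem mem_of_evalB_imp (hS : MCS S) (hφ : φ ∈ S)
    (hv : ∀ v, evalB v φ = true → evalB v ψ = true) : ψ ∈ S :=
  hS.mem_of_derivableFrom ((DerivableFrom.of_mem hφ).of_evalB_imp hv)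

theorem top_mem (hS : MCS S) : Formula.top ∈ S :=
  hS.mem_of_derivableFrom (.of_derivable (.taut fun _ => rfl))

theorem neg_mem_iff (hS : MCS S) : φ.neg ∈ S ↔ φ ∉ S := by
  have neg_iff_imp_bot (v : Formula P → Bool) :
      evalB v φ.neg = true ↔ evalB v (φ.imp Formula.bot) = true := by
    simp [evalB_neg, evalB_imp, evalB_bot]
  constructor
  · intro hneg hφ
    have himp := (DerivableFrom.of_mem hneg).of_evalB_imp fun v => (neg_iff_imp_bot v).1
    exact hS.1 (himp.mp (.of_mem hφ))
  · intro hφ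
    have hincons : ¬ Consistent (insert φ S) := fun hcons =>
      hφ (hS.2 _ hcons (Set.subset_insert φ S) ▸ Set.mem_insert φ S)
    have hbot : DerivableFrom (insert φ S) Formula.bot := not_not.1 hincons
    exact hS.mem_of_derivableFrom (hbot.deduction.of_evalB_imp fun v => (neg_iff_imp_bot v).2)

theorem and_mem_iff (hS : MCS S) : φ.and ψ ∈ S ↔ φ ∈ S ∧ ψ ∈ S where
  mp h := ⟨hS.mem_of_evalB_imp h fun v hv => ((evalB_and v φ ψ).1 hv).1,
    hS.mem_of_evalB_imp h fun v hv => ((evalB_and v φ ψ).1 hv).2⟩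
  mpr h := hS.mem_of_derivableFrom ((DerivableFrom.of_mem h.1).and_intro (.of_mem h.2))

theorem imp_mem_iff (hS : MCS S) : φ.imp ψ ∈ S ↔ (φ ∈ S → ψ ∈ S) := by
  rw [Formula.imp, hS.neg_mem_iff, hS.and_mem_iff, hS.neg_mem_iff, not_and_not_right]

theorem kh_trans (hS : MCS S) (hφχ : φ.kh χ ∈ S) (hχψ : χ.kh ψ ∈ S) : φ.kh ψ ∈ S :=
  hS.mem_of_derivable_imp (.compKh φ χ ψ) (hS.and_mem_iff.2 ⟨hφχ, hχψ⟩)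

end MCS

section Lindenbaum

variable {P : Type} {S : Set (Formula P)} {φ : Formula P}

theorem Consistent.sUnion {c : Set (Set (Formula P))} (hcons : ∀ T ∈ c, Consistent T)
    (hc : IsChain (· ⊆ ·) c) (hne : c.Nonempty) : Consistent (⋃₀ c) := by
  rintro ⟨l, hl, hbot⟩
  obtain ⟨T, hT, hlT⟩ :=
    hc.directedOn.exists_mem_subset_of_finite_of_subset_sUnion hne l.finite_toSet hl
  exact hcons T hT ⟨l, hlT, hbot⟩

theorem Consistent.exists_subset_mcs (hS : Consistent S) : ∃ T, S ⊆ T ∧ MCS T := by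
  obtain ⟨T, hST, hT⟩ := zorn_subset_nonempty {T | Consistent T}
    (fun c hcons hc hne => ⟨⋃₀ c, .sUnion hcons hc hne, fun _ => Set.subset_sUnion_of_mem⟩) S hS
  exact ⟨T, hST, hT.prop, fun Θ hΘ hTΘ => (hT.eq_of_subset hΘ hTΘ).symm⟩

theorem derivableFrom_of_forall_mcs (h : ∀ T, MCS T → S ⊆ T → φ ∈ T) : DerivableFrom S φ := by
  by_contra hφ
  have hcons : Consistent (insert φ.neg S) := fun hbot =>
    hφ ((DerivableFrom.deduction hbot).of_evalB_imp fun v => by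
      simp [evalB_imp, evalB_neg, evalB_bot])
  obtain ⟨T, hsub, hT⟩ := hcons.exists_subset_mcs
  obtain ⟨hneg, hST⟩ := Set.insert_subset_iff.1 hsub
  exact hT.neg_mem_iff.1 hneg (h T hT hST)

end Lindenbaum

section CanonicalStates

variable {P : Type} {Γ Δ : Set (Formula P)} {φ ψ : Formula P}

/-- The `Kh`-formulas and negated `Kh`-formulas in `Γ`: what all states of the canonical model for
`Γ` have in common. -/
def khLiterals (Γ : Set (Formula P)) : Set (Formula P) :=
  {χ | χ ∈ Γ ∧ ∃ ψ φ : Formula P, χ = ψ.kh φ ∨ χ = (ψ.kh φ).neg}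

theorem kh_mem_iff_of_mem_canonStates (hΔ : Δ ∈ canonStates Γ) : ψ.kh φ ∈ Δ ↔ ψ.kh φ ∈ Γ := by
  simpa [khPart] using Set.ext_iff.1 hΔ.2 (ψ.kh φ)

theorem mem_canonStates_of_khLiterals_subset (hΓ : MCS Γ) (hΔ : MCS Δ)
    (hsub : khLiterals Γ ⊆ Δ) : Δ ∈ canonStates Γ := by
  refine ⟨hΔ, Set.Subset.antisymm ?_ ?_⟩
  · rintro _ ⟨hmem, ψ, φ, rfl⟩
    refine ⟨?_, ψ, φ, rfl⟩
    by_contra hnot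
    exact hΔ.neg_mem_iff.1 (hsub ⟨hΓ.neg_mem_iff.2 hnot, ψ, φ, .inr rfl⟩) hmem
  · rintro _ ⟨hmem, ψ, φ, rfl⟩
    exact ⟨hsub ⟨hmem, ψ, φ, .inl rfl⟩, ψ, φ, rfl⟩

theorem MCS.U_mem_of_mem_khLiterals (hΓ : MCS Γ) (hφ : φ ∈ khLiterals Γ) : φ.U ∈ Γ := by
  obtain ⟨hmem, α, β, rfl | rfl⟩ := hφ
  · exact hΓ.mem_of_derivable_imp (.fourKU α β) hmem
  · exact hΓ.mem_of_derivable_imp (.fiveKU α β) hmem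

theorem MCS.U_mem_iff_forall_canonStates (hΓ : MCS Γ) :
    φ.U ∈ Γ ↔ ∀ Δ ∈ canonStates Γ, φ ∈ Δ := by
  constructor
  · intro hU Δ hΔ
    exact hΔ.1.mem_of_derivable_imp (.tU φ) ((kh_mem_iff_of_mem_canonStates hΔ).2 hU)
  · intro h
    have hφ : DerivableFrom (khLiterals Γ) φ := derivableFrom_of_forall_mcs fun T hT hsub =>
      h T (mem_canonStates_of_khLiterals_subset hΓ hT hsub)
    exact hΓ.mem_of_derivableFrom
      (hφ.necU fun χ hχ => .of_mem (hΓ.U_mem_of_mem_khLiterals hχ))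

theorem MCS.kh_mem_of_forall_canonStates (hΓ : MCS Γ)
    (h : ∀ Δ ∈ canonStates Γ, ψ ∈ Δ → φ ∈ Δ) : ψ.kh φ ∈ Γ :=
  hΓ.mem_of_derivable_imp (.emp ψ φ)
    (hΓ.U_mem_iff_forall_canonStates.2 fun Δ hΔ => hΔ.1.imp_mem_iff.2 (h Δ hΔ))

theorem MCS.exists_canonStates_mem_of_kh_mem (hΓ : MCS Γ) (hkh : ψ.kh φ ∈ Γ)
    (hΔ : Δ ∈ canonStates Γ) (hψ : ψ ∈ Δ) : ∃ Θ ∈ canonStates Γ, φ ∈ Θ := by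
  by_contra! hφ
  have hφ_bot : φ.kh Formula.bot ∈ Γ :=
    hΓ.kh_mem_of_forall_canonStates fun Θ hΘ hmem => absurd hmem (hφ Θ hΘ)
  have hnegneg : ψ.neg.neg.kh ψ ∈ Γ := hΓ.kh_mem_of_forall_canonStates fun Θ hΘ hmem => by
    rwa [hΘ.1.neg_mem_iff, hΘ.1.neg_mem_iff, not_not] at hmem
  have hU : ψ.neg.U ∈ Γ := hΓ.kh_trans hnegneg (hΓ.kh_trans hkh hφ_bot)
  exact hΔ.1.neg_mem_iff.1 (hΓ.U_mem_iff_forall_canonStates.1 hU Δ hΔ) hψ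

end CanonicalStates

namespace Model

variable {P A : Type} (M : Model P A) (a : A) (σ : List A) (s : M.S) (T : M.S → Prop)

/-- The plan `σ` is strongly executable at `s` and can only end in states satisfying `T`: the
condition that the semantics of `Kh(ψ, φ)` imposes on every state `s` satisfying `ψ`. -/
def Guarantees : Prop := M.SE σ s ∧ ∀ t, M.runs σ s t → T t

theorem se_cons : M.SE (a :: σ) s ↔ (∃ t, M.R a s t) ∧ ∀ t, M.R a s t → M.SE σ t where
  mp h := ⟨h 0 (Nat.succ_pos _) s rfl,
    fun t hst k hk u htu => h (k + 1) (Nat.succ_lt_succ hk) u ⟨t, hst, htu⟩⟩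
  mpr h
    | 0, _, _, hst => hst ▸ h.1
    | k + 1, hk, u, ⟨t, hst, htu⟩ => h.2 t hst k (Nat.lt_of_succ_lt_succ hk) u htu

theorem guarantees_nil : M.Guarantees [] s T ↔ T s := by
  simp [Guarantees, SE, runs]

theorem guarantees_cons :
    M.Guarantees (a :: σ) s T ↔
      (∃ t, M.R a s t) ∧ ∀ t, M.R a s t → M.Guarantees σ t T := by
  simp only [Guarantees, se_cons, runs]
  grind

theorem guarantees_singleton :
    M.Guarantees [a] s T ↔ (∃ t, M.R a s t) ∧ ∀ t, M.R a s t → T t := by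
  simp only [guarantees_cons, guarantees_nil]

end Model

section Plans

variable {P : Type} {Γ : Set (Formula P)} (hΓ : MCS Γ) {φ ψ : Formula P}

theorem MCS.kh_mem_of_guarantees {σ : List (SigmaGamma Γ)}
    (hσ : ∀ s : (canonicalModel Γ hΓ).S, ψ ∈ s.val →
      (canonicalModel Γ hΓ).Guarantees σ s fun t => φ ∈ t.val) : ψ.kh φ ∈ Γ := by
  induction σ generalizing ψ with
  | nil => exact hΓ.kh_mem_of_forall_canonStates fun Δ hΔ hψ =>
      (Model.guarantees_nil _ _ _).1 (hσ ⟨Δ, hΔ⟩ hψ)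
  | cons a σ ih =>
    simp only [Model.guarantees_cons] at hσ
    have hpre (s : (canonicalModel Γ hΓ).S) (hs : ψ ∈ s.val) : a.val.1 ∈ s.val :=
      let ⟨_, hR⟩ := (hσ s hs).1
      hR.1
    by_cases hψ : ∃ s : (canonicalModel Γ hΓ).S, ψ ∈ s.val
    · obtain ⟨s, hs⟩ := hψ
      have hψ_pre : ψ.kh a.val.1 ∈ Γ :=
        hΓ.kh_mem_of_forall_canonStates fun Δ hΔ => hpre ⟨Δ, hΔ⟩
      have hpost_φ : a.val.2.kh φ ∈ Γ := ih fun t ht => (hσ s hs).2 t ⟨hpre s hs, ht⟩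
      exact hΓ.kh_trans hψ_pre (hΓ.kh_trans a.property hpost_φ)
    · exact hΓ.kh_mem_of_forall_canonStates fun Δ hΔ hmem => absurd ⟨⟨Δ, hΔ⟩, hmem⟩ hψ

theorem MCS.guarantees_singleton_of_kh_mem (hkh : ψ.kh φ ∈ Γ) (s : (canonicalModel Γ hΓ).S)
    (hψ : ψ ∈ s.val) :
    (canonicalModel Γ hΓ).Guarantees [⟨(ψ, φ), hkh⟩] s fun t => φ ∈ t.val := by
  obtain ⟨Θ, hΘ, hφ⟩ := hΓ.exists_canonStates_mem_of_kh_mem hkh s.property hψ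
  exact (Model.guarantees_singleton _ _ _ _).2 ⟨⟨⟨Θ, hΘ⟩, hψ, hφ⟩, fun _ hR => hR.2⟩

theorem MCS.kh_mem_iff_exists_guarantees : ψ.kh φ ∈ Γ ↔
    ∃ σ : List (SigmaGamma Γ), ∀ s : (canonicalModel Γ hΓ).S, ψ ∈ s.val →
      (canonicalModel Γ hΓ).Guarantees σ s fun t => φ ∈ t.val :=
  ⟨fun hkh => ⟨_, hΓ.guarantees_singleton_of_kh_mem hkh⟩,
    fun ⟨_, hσ⟩ => hΓ.kh_mem_of_guarantees hσ⟩

end Plans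

/-- truth lemma for the canonical model: for every maximal
SKH-consistent set Γ, every state Δ of S^c_Γ, and every formula φ,
M^c_Γ, Δ ⊨ φ iff φ ∈ Δ. -/
theorem truth_lemma {P : Type} (Γ : Set (Formula P)) (hΓ : MCS Γ)
    (Δ : Set (Formula P)) (hΔ : Δ ∈ canonStates Γ) (φ : Formula P) :
    Sat (canonicalModel Γ hΓ) φ ⟨Δ, hΔ⟩ ↔ φ ∈ Δ := by
  induction φ generalizing Δ with
  | top => exact iff_of_true trivial hΔ.1.top_mem
  | atom p => exact Iff.rfl
  | neg φ ih => exact (not_congr (ih Δ hΔ)).trans hΔ.1.neg_mem_iff.symm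
  | and φ ψ ihφ ihψ => exact (and_congr (ihφ Δ hΔ) (ihψ Δ hΔ)).trans hΔ.1.and_mem_iff.symm
  | kh ψ φ ihψ ihφ =>
    rw [kh_mem_iff_of_mem_canonStates hΔ, hΓ.kh_mem_iff_exists_guarantees]
    exact exists_congr fun σ => forall_congr' fun s => imp_congr (ihψ s.1 s.2) <|
      and_congr_right' <| forall_congr' fun t => imp_congr_right fun _ => ihφ t.1 t.2
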